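/- Let S be a recurrent completely reducible set, let σ = 𝟙_S and ψ = ψ_σ its syntactic representation. Then the number of irreducible constituents of ψ is equal to the number of irreducible constituents of the restriction of ψ to the Suschkevitch group of the finite monoid ψ(A*). -/

import Mathlib

namespace Birec

variable {A : Type*}

/-- The left quotient `u⁻¹S = {v | u v ∈ S}`. -/
def leftQuot (S : Set (List A)) (u : List A) : Set (List A) := {v | u ++ v ∈ S}

/-- A language is recognizable iff it has finitely many left quotients (Nerode). -/
def Recognizable (S : Set (List A)) : Prop := (Set.range (leftQuot S)).Finite

/-- The reversal `S̃` of a language. -/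
def langRev (S : Set (List A)) : Set (List A) := {w | w.reverse ∈ S}

/-- A recognizable set is recurrent if its minimal automaton (whose states are the
nonempty left quotients) is strongly connected. -/
def Recurrent (S : Set (List A)) : Prop :=
  Recognizable S ∧
    ∀ u v : List A, (leftQuot S u).Nonempty → (leftQuot S v).Nonempty →
      ∃ w : List A, leftQuot S (u ++ w) = leftQuot S v

/-- A set is birecurrent if it is recurrent together with its reversal. -/
def Birecurrent (S : Set (List A)) : Prop := Recurrent S ∧ Recurrent (langRev S)

/-- A set is dense if every word is a factor of one of its words. -/
def LangDense (S : Set (List A)) : Prop := ∀ v : List A, ∃ u w : List A, u ++ v ++ w ∈ S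

end Birec
namespace Birec

variable {A : Type*}

/-- The characteristic series of a language, as a function `A* → ℚ`. -/
noncomputable def charFun (S : Set (List A)) : List A → ℚ := S.indicator 1

/-- The shift operator `τ ↦ τ · u`, where `(τ · u)(v) = τ(u v)`; this is the linear
action underlying the syntactic representation. -/
def shiftOp (u : List A) : (List A → ℚ) →ₗ[ℚ] (List A → ℚ) where
  toFun τ := fun v => τ (u ++ v)
  map_add' := fun _ _ => rfl
  map_smul' := fun _ _ => rfl

/-- The syntactic space of a series `σ`: the subspace of `ℚ⟨⟨A⟩⟩` spanned by the
series `σ · u` for `u ∈ A*`. -/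
def synSpace (σ : List A → ℚ) : Submodule ℚ (List A → ℚ) :=
  Submodule.span ℚ (Set.range fun u : List A => shiftOp u σ)

/-- A subspace is invariant if it is stable under all shift operators. -/
def InvariantSub (W : Submodule ℚ (List A → ℚ)) : Prop :=
  ∀ τ ∈ W, ∀ u : List A, shiftOp u τ ∈ W

/-- An invariant subspace is irreducible if it is nonzero and has no nontrivial
invariant subspace. -/
def IrreducibleSub (W : Submodule ℚ (List A → ℚ)) : Prop :=
  W ≠ ⊥ ∧ ∀ W' : Submodule ℚ (List A → ℚ), W' ≤ W → InvariantSub W' → W' = ⊥ ∨ W' = W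

/-- A series is completely reducible if its syntactic space is a direct sum of
invariant irreducible subspaces (equivalently, its syntactic representation is a
direct sum of irreducible representations). -/
def CompletelyReducibleSeries (σ : List A → ℚ) : Prop :=
  ∃ (n : ℕ) (W : Fin n → Submodule ℚ (List A → ℚ)),
    (∀ i, W i ≤ synSpace σ ∧ InvariantSub (W i) ∧ IrreducibleSub (W i)) ∧
    iSupIndep W ∧ (⨆ i, W i) = synSpace σ

/-- A language is completely reducible if its characteristic series is. -/
noncomputable def CompletelyReducibleLang (S : Set (List A)) : Prop :=
  CompletelyReducibleSeries (charFun S)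

/-- The rank of the element `ψ_σ(u)` of the syntactic monoid, i.e. the dimension of the
image of the syntactic space under the shift by `u`. -/
noncomputable def psiRank (σ : List A → ℚ) (u : List A) : ℕ :=
  Module.finrank ℚ ↥(Submodule.map (shiftOp u) (synSpace σ))

/-- `u` induces an element of minimal nonzero rank of the syntactic monoid. -/
def IsMinNonzeroPsiRank (σ : List A → ℚ) (u : List A) : Prop :=
  psiRank σ u ≠ 0 ∧ ∀ v : List A, psiRank σ v ≠ 0 → psiRank σ u ≤ psiRank σ v

/-- The eventual kernel `EK(S)`: the intersection (inside the syntactic space) of the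
kernels of all elements of minimal nonzero rank of the syntactic monoid. -/
noncomputable def EK (S : Set (List A)) : Submodule ℚ (List A → ℚ) :=
  synSpace (charFun S) ⊓
    ⨅ u ∈ {u : List A | IsMinNonzeroPsiRank (charFun S) u}, LinearMap.ker (shiftOp u)

/-- The eventual range `ER(S)`: the subspace spanned by the images of all elements of
minimal nonzero rank of the syntactic monoid. -/
noncomputable def ER (S : Set (List A)) : Submodule ℚ (List A → ℚ) :=
  ⨆ u ∈ {u : List A | IsMinNonzeroPsiRank (charFun S) u},
    Submodule.map (shiftOp u) (synSpace (charFun S))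

end Birec

open Birec

namespace Birec

/-- The length of the sum of a finite independent family of simple submodules is the number of
its members. -/
theorem length_iSup_of_iSupIndep_of_isSimpleModule {R M ι : Type*} [Ring R] [AddCommGroup M]
    [Module R M] [Fintype ι] (p : ι → Submodule R M) (hp : iSupIndep p)
    [∀ i, IsSimpleModule R (p i)] :
    Module.length R (⨆ i, p i : Submodule R M) = Fintype.card ι := by
  classical
  rw [Submodule.iSup_eq_range_dfinsupp_lsum,
    ← (LinearEquiv.ofInjective _ hp.dfinsupp_lsum_injective).length_eq,
    DFinsupp.linearEquivFunOnFintype.length_eq, Module.length_pi_of_fintype]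
  simp [Module.length_eq_one]

section Invariant

variable {K M : Type*} [CommRing K] [AddCommGroup M] [Module K M]

/-- A submodule stable under a set of operators, as a submodule over the algebra they generate. -/
def adjoinSubmodule (s : Set (Module.End K M)) (p : Submodule K M)
    (hp : ∀ f ∈ s, ∀ v ∈ p, f v ∈ p) : Submodule (Algebra.adjoin K s) M where
  carrier := p
  add_mem' := p.add_mem
  zero_mem' := p.zero_mem
  smul_mem' := by
    rintro ⟨f, hf⟩ v hv
    change f v ∈ p
    induction hf using Algebra.adjoin_induction generalizing v with
    | mem f hf => exact hp f hf v hv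
    | algebraMap r => simpa using p.smul_mem r hv
    | add f g _ _ hf hg => exact p.add_mem (hf hv) (hg hv)
    | mul f g _ _ hf hg => exact hf (hg hv)

@[simp]
theorem restrictScalars_adjoinSubmodule (s : Set (Module.End K M)) (p : Submodule K M)
    (hp : ∀ f ∈ s, ∀ v ∈ p, f v ∈ p) :
    (adjoinSubmodule s p hp).restrictScalars K = p := rfl

theorem restrictScalars_adjoin_stable (s : Set (Module.End K M))
    (q : Submodule (Algebra.adjoin K s) M) :
    ∀ f ∈ s, ∀ v ∈ q.restrictScalars K, f v ∈ q.restrictScalars K :=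
  fun f hf _ hv => q.smul_mem (⟨f, Algebra.subset_adjoin hf⟩ : Algebra.adjoin K s) hv

theorem isSimpleModule_adjoinSubmodule (s : Set (Module.End K M)) (p : Submodule K M)
    (hp : ∀ f ∈ s, ∀ v ∈ p, f v ∈ p) (hne : p ≠ ⊥)
    (hirr : ∀ q ≤ p, (∀ f ∈ s, ∀ v ∈ q, f v ∈ q) → q = ⊥ ∨ q = p) :
    IsSimpleModule (Algebra.adjoin K s) (adjoinSubmodule s p hp) := by
  rw [isSimpleModule_iff_isAtom]
  refine ⟨fun h => hne ?_, fun q hq => ?_⟩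
  · simpa using congrArg (Submodule.restrictScalars K) h
  · refine (hirr (q.restrictScalars K) hq.le (restrictScalars_adjoin_stable s q)).elim
      (fun h => ?_) (fun h => absurd ?_ hq.ne)
    · exact Submodule.restrictScalars_injective K _ _ (by simpa using h)
    · exact Submodule.restrictScalars_injective K _ _ (by simpa using h)

theorem iSupIndep_adjoinSubmodule {ι : Type*} (s : Set (Module.End K M)) (p : ι → Submodule K M)
    (hp : ∀ i, ∀ f ∈ s, ∀ v ∈ p i, f v ∈ p i) (hind : iSupIndep p) :
    iSupIndep fun i => adjoinSubmodule s (p i) (hp i) := by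
  intro i
  rw [disjoint_iff]
  apply Submodule.restrictScalars_injective K
  simpa [Submodule.restrictScalars_iSup] using (hind i).eq_bot

/-- Two decompositions of a subspace into finitely many subspaces which are invariant and
irreducible under a set of operators have the same number of summands. -/
theorem card_eq_of_iSup_eq {ι κ : Type*} [Fintype ι] [Fintype κ] (s : Set (Module.End K M))
    (p : ι → Submodule K M) (q : κ → Submodule K M)
    (hp : ∀ i, ∀ f ∈ s, ∀ v ∈ p i, f v ∈ p i) (hq : ∀ j, ∀ f ∈ s, ∀ v ∈ q j, f v ∈ q j)
    (hp_ne : ∀ i, p i ≠ ⊥) (hq_ne : ∀ j, q j ≠ ⊥)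
    (hp_irr : ∀ i, ∀ r ≤ p i, (∀ f ∈ s, ∀ v ∈ r, f v ∈ r) → r = ⊥ ∨ r = p i)
    (hq_irr : ∀ j, ∀ r ≤ q j, (∀ f ∈ s, ∀ v ∈ r, f v ∈ r) → r = ⊥ ∨ r = q j)
    (hp_ind : iSupIndep p) (hq_ind : iSupIndep q) (h : ⨆ i, p i = ⨆ j, q j) :
    Fintype.card ι = Fintype.card κ := by
  have := fun i => isSimpleModule_adjoinSubmodule s (p i) (hp i) (hp_ne i) (hp_irr i)
  have := fun j => isSimpleModule_adjoinSubmodule s (q j) (hq j) (hq_ne j) (hq_irr j)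
  have h' : ⨆ i, adjoinSubmodule s (p i) (hp i) = ⨆ j, adjoinSubmodule s (q j) (hq j) := by
    apply Submodule.restrictScalars_injective K
    simpa [Submodule.restrictScalars_iSup] using h
  have hlen := length_iSup_of_iSupIndep_of_isSimpleModule _
    (iSupIndep_adjoinSubmodule s p hp hp_ind)
  rw [h', length_iSup_of_iSupIndep_of_isSimpleModule _
    (iSupIndep_adjoinSubmodule s q hq hq_ind)] at hlen
  exact_mod_cast hlen.symm

end Invariant

variable {A : Type*}

theorem shiftOp_append (u v : List A) (τ : List A → ℚ) :
    shiftOp (u ++ v) τ = shiftOp v (shiftOp u τ) := by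
  funext w
  simp [shiftOp]

@[simp]
theorem shiftOp_nil (τ : List A → ℚ) : shiftOp [] τ = τ := rfl

theorem shiftOp_charFun (S : Set (List A)) (u : List A) :
    shiftOp u (charFun S) = charFun (leftQuot S u) := rfl

theorem nonempty_leftQuot_of_shiftOp_ne_zero {S : Set (List A)} {u : List A}
    (h : shiftOp u (charFun S) ≠ 0) : (leftQuot S u).Nonempty := by
  by_contra hu
  rw [Set.not_nonempty_iff_eq_empty] at hu
  exact h (by rw [shiftOp_charFun, hu, charFun, Set.indicator_empty]; rfl)

/-- The syntactic space of a recurrent language is generated, as an invariant subspace, by the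
image of any shift operator which does not vanish on it. -/
theorem synSpace_le_of_map_shiftOp_le {S : Set (List A)} (hrec : Recurrent S) {x : List A}
    (hx : (synSpace (charFun S)).map (shiftOp x) ≠ ⊥) {C : Submodule ℚ (List A → ℚ)}
    (hC : InvariantSub C) (hle : (synSpace (charFun S)).map (shiftOp x) ≤ C) :
    synSpace (charFun S) ≤ C := by
  obtain ⟨u, hu⟩ : ∃ u, shiftOp (u ++ x) (charFun S) ≠ 0 := by
    by_contra! h
    refine hx (eq_bot_iff.2 ?_)
    rw [synSpace, Submodule.map_span_le]
    rintro _ ⟨u, rfl⟩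
    simpa [shiftOp_append] using h u
  have huC : shiftOp (u ++ x) (charFun S) ∈ C := by
    rw [shiftOp_append]
    exact hle (Submodule.mem_map_of_mem (Submodule.subset_span ⟨u, rfl⟩))
  refine Submodule.span_le.2 ?_
  rintro _ ⟨v, rfl⟩
  change shiftOp v (charFun S) ∈ C
  by_cases hv : shiftOp v (charFun S) = 0
  · simp [hv]
  · obtain ⟨w, hw⟩ := hrec.2 (u ++ x) v (nonempty_leftQuot_of_shiftOp_ne_zero hu)
      (nonempty_leftQuot_of_shiftOp_ne_zero hv)
    rw [shiftOp_charFun, ← hw, ← shiftOp_charFun, shiftOp_append]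
    exact hC _ huC w

theorem map_shiftOp_le_of_invariantSub {W : Submodule ℚ (List A → ℚ)} (hW : InvariantSub W)
    (x : List A) : W.map (shiftOp x) ≤ W :=
  Submodule.map_le_iff_le_comap.2 fun τ hτ => hW τ hτ x

theorem InvariantSub.iSup {ι : Sort*} {W : ι → Submodule ℚ (List A → ℚ)}
    (hW : ∀ i, InvariantSub (W i)) : InvariantSub (⨆ i, W i) := by
  intro τ hτ u
  have h : ⨆ i, W i ≤ (⨆ i, W i).comap (shiftOp u) :=
    iSup_le fun i τ hτ => Submodule.mem_iSup_of_mem i (hW i τ hτ u)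
  exact h hτ

/-- No member of a decomposition of the syntactic space of a recurrent language into nonzero
invariant subspaces is annihilated by a shift operator which does not vanish on the space. -/
theorem map_shiftOp_ne_bot_of_iSupIndep {S : Set (List A)} (hrec : Recurrent S) {x : List A}
    (hx : (synSpace (charFun S)).map (shiftOp x) ≠ ⊥) {ι : Type*}
    {W : ι → Submodule ℚ (List A → ℚ)} (hWinv : ∀ i, InvariantSub (W i)) (hWind : iSupIndep W)
    (hWsup : ⨆ i, W i = synSpace (charFun S)) {i : ι} (hi : W i ≠ ⊥) :
    (W i).map (shiftOp x) ≠ ⊥ := by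
  intro h
  have hC : InvariantSub (⨆ (j) (_ : j ≠ i), W j) :=
    InvariantSub.iSup fun j => InvariantSub.iSup fun _ => hWinv j
  have hle : synSpace (charFun S) ≤ ⨆ (j) (_ : j ≠ i), W j := by
    refine synSpace_le_of_map_shiftOp_le hrec hx hC ?_
    rw [← hWsup, Submodule.map_iSup]
    refine iSup_le fun j => ?_
    by_cases hj : j = i
    · simp [hj, h]
    · exact (map_shiftOp_le_of_invariantSub (hWinv j) x).trans
        (le_iSup₂_of_le j hj le_rfl)
  exact hi ((hWind i).eq_bot_of_le (((le_iSup W i).trans_eq hWsup).trans hle))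

/-- If `x` acts idempotently on an irreducible invariant subspace `W`, then `W · x` is irreducible
under the operators induced by `x A* x`. -/
theorem eq_bot_or_eq_map_shiftOp {W : Submodule ℚ (List A → ℚ)} (hWinv : InvariantSub W)
    (hWirr : IrreducibleSub W) {x : List A}
    (hx : ∀ τ ∈ W, shiftOp (x ++ x) τ = shiftOp x τ) {U : Submodule ℚ (List A → ℚ)}
    (hUle : U ≤ W.map (shiftOp x)) (hU : ∀ τ ∈ U, ∀ u : List A, shiftOp (x ++ u ++ x) τ ∈ U) :
    U = ⊥ ∨ U = W.map (shiftOp x) := by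
  have hT : InvariantSub (⨆ u : List A, U.map (shiftOp u)) := by
    intro τ hτ v
    have h : ⨆ u, U.map (shiftOp u) ≤ (⨆ u, U.map (shiftOp u)).comap (shiftOp v) := by
      refine iSup_le fun u => ?_
      rintro _ ⟨τ, hτ, rfl⟩
      exact Submodule.mem_iSup_of_mem (u ++ v) ⟨τ, hτ, shiftOp_append u v τ⟩
    exact h hτ
  have hUT : U ≤ ⨆ u : List A, U.map (shiftOp u) :=
    fun τ hτ => Submodule.mem_iSup_of_mem [] ⟨τ, hτ, shiftOp_nil τ⟩
  have hTW : ⨆ u : List A, U.map (shiftOp u) ≤ W :=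
    iSup_le fun u => (Submodule.map_mono (hUle.trans
      (map_shiftOp_le_of_invariantSub hWinv x))).trans (map_shiftOp_le_of_invariantSub hWinv u)
  refine (hWirr.2 _ hTW hT).imp (fun h => le_bot_iff.1 (hUT.trans_eq h))
    fun h => le_antisymm hUle ?_
  rw [← h, Submodule.map_iSup]
  refine iSup_le fun u => ?_
  rintro _ ⟨_, ⟨τ, hτ, rfl⟩, rfl⟩
  obtain ⟨τ', hτ', rfl⟩ := hUle hτ
  have key := hU _ hτ u
  rwa [shiftOp_append, shiftOp_append, ← shiftOp_append x x, hx τ' hτ'] at key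

end Birec

/-- **Proposition.** Let `S` be a recurrent completely reducible set, `σ = 𝟙_S`, and
`ψ = ψ_σ` its syntactic representation.  The number of irreducible constituents of `ψ`
equals the number of irreducible constituents of the restriction of `ψ` to the
Suschkevitch group of the finite monoid `ψ(A*)`.

The Suschkevitch group is realized as `ψ(x A* x)` acting on `V_σ · ψ(x)`, where `x` is a
word such that `ψ(x)` is an idempotent of the `0`-minimal ideal of `ψ(A*)` (an
idempotent of minimal nonzero rank).  The statement says: any decomposition of the
syntactic space into `ψ`-invariant irreducible subspaces and any decomposition of
`V_σ · ψ(x)` into subspaces invariant and irreducible under all the operators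
`ψ(x u x)` have the same number of summands. -/
theorem card_irreducible_constituents_eq {A : Type*} [Fintype A] (S : Set (List A))
    (hrec : Recurrent S) (hcr : CompletelyReducibleLang S)
    (x : List A)
    (hxidem : ∀ τ ∈ synSpace (charFun S), shiftOp (x ++ x) τ = shiftOp x τ)
    (hxmin : IsMinNonzeroPsiRank (charFun S) x)
    (n m : ℕ)
    (W : Fin n → Submodule ℚ (List A → ℚ)) (U : Fin m → Submodule ℚ (List A → ℚ))
    (hWle : ∀ i, W i ≤ synSpace (charFun S))
    (hWinv : ∀ i, InvariantSub (W i))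
    (hWirr : ∀ i, IrreducibleSub (W i))
    (hWind : iSupIndep W)
    (hWsup : (⨆ i, W i) = synSpace (charFun S))
    (hUle : ∀ j, U j ≤ Submodule.map (shiftOp x) (synSpace (charFun S)))
    (hUinv : ∀ j, ∀ τ ∈ U j, ∀ u : List A, shiftOp (x ++ u ++ x) τ ∈ U j)
    (hUirr : ∀ j, U j ≠ ⊥ ∧ ∀ U' : Submodule ℚ (List A → ℚ), U' ≤ U j →
      (∀ τ ∈ U', ∀ u : List A, shiftOp (x ++ u ++ x) τ ∈ U') → U' = ⊥ ∨ U' = U j)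
    (hUind : iSupIndep U)
    (hUsup : (⨆ j, U j) = Submodule.map (shiftOp x) (synSpace (charFun S))) :
    n = m := by
  have hx : (synSpace (charFun S)).map (shiftOp x) ≠ ⊥ := fun h =>
    hxmin.1 (by rw [psiRank, h, finrank_bot])
  have hstable : ∀ p : Submodule ℚ (List A → ℚ),
      (∀ f ∈ Set.range fun u : List A => shiftOp (x ++ u ++ x), ∀ τ ∈ p, f τ ∈ p) ↔
        ∀ τ ∈ p, ∀ u : List A, shiftOp (x ++ u ++ x) τ ∈ p := fun p => by
    rw [Set.forall_mem_range]
    exact ⟨fun h τ hτ u => h u τ hτ, fun h u τ hτ => h τ hτ u⟩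
  have hWx : ∀ i, (W i).map (shiftOp x) ≤ W i :=
    fun i => map_shiftOp_le_of_invariantSub (hWinv i) x
  have hcard := card_eq_of_iSup_eq (Set.range fun u : List A => shiftOp (x ++ u ++ x))
    (fun i => (W i).map (shiftOp x)) U
    (fun i => (hstable _).2 fun τ hτ u => by
      rw [shiftOp_append]
      exact Submodule.mem_map_of_mem (hWinv i _ (hWx i hτ) (x ++ u)))
    (fun j => (hstable _).2 (hUinv j))
    (fun i => map_shiftOp_ne_bot_of_iSupIndep hrec hx hWinv hWind hWsup (hWirr i).1)
    (fun j => (hUirr j).1)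
    (fun i r hr h => eq_bot_or_eq_map_shiftOp (hWinv i) (hWirr i)
      (fun τ hτ => hxidem τ (hWle i hτ)) hr ((hstable r).1 h))
    (fun j r hr h => (hUirr j).2 r hr ((hstable r).1 h))
    (hWind.mono hWx) hUind (by rw [← Submodule.map_iSup, hWsup, hUsup])
  simpa using hcard
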